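/- The function φ is not monotone. More precisely, for every integer n ≥ 6, setting n₁ = C(n,3), n₂ = C(n,3) + 1, and n₃ = C(n+1,3), we have n₁ < n₂ < n₃, φ(n₁) = n, φ(n₂) ≤ n − 1, and φ(n₃) = n + 1; hence φ(n₂) < φ(n₁) < φ(n₃). -/

import Mathlib

open Finset Matrix

/-- The sign `[T : e]` of an edge `e` in a triangle `T`. -/
noncomputable def triSign (T e : Finset ℕ) : ℝ :=
  if e ⊆ T ∧ e.card = 2 ∧ T.card = 3 then
    if (T \ e).max = T.max ∨ (T \ e).min = T.min then 1 else -1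
  else 0

/-- A triangle family: a nonempty finite set of 3-element subsets of ℕ. -/
def IsTriFam (F : Finset (Finset ℕ)) : Prop :=
  F.Nonempty ∧ ∀ T ∈ F, T.card = 3

/-- The edges of the support graph of a triangle family. -/
def edgesOf (F : Finset (Finset ℕ)) : Finset (Finset ℕ) :=
  F.biUnion fun T => T.powersetCard 2

/-- The vertices of the support graph of a triangle family. -/
def vertsOf (F : Finset (Finset ℕ)) : Finset ℕ :=
  F.biUnion id

/-- The signed edge-triangle incidence matrix of a triangle family. -/
noncomputable def delta1 (F : Finset (Finset ℕ)) :
    Matrix {T // T ∈ F} {e // e ∈ edgesOf F} ℝ :=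
  Matrix.of fun T e => triSign T.1 e.1

/-- The smallest positive eigenvalue of a matrix. -/
noncomputable def lambdaMinPos {m : Type*} [Fintype m] (M : Matrix m m ℝ) : ℝ :=
  sInf {μ : ℝ | 0 < μ ∧ ∃ v : m → ℝ, v ≠ 0 ∧ M.mulVec v = μ • v}

/-- `λ(𝒯)`: the smallest positive eigenvalue of `δ₁(𝒯)ᵀ δ₁(𝒯)`. -/
noncomputable def lam (F : Finset (Finset ℕ)) : ℝ :=
  lambdaMinPos ((delta1 F)ᵀ * delta1 F)

/-- The neighborhood of `x` in the support graph `Γ₀(F)`. -/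
def nbrs (F : Finset (Finset ℕ)) (x : ℕ) : Finset ℕ :=
  (vertsOf F).filter fun y => x ≠ y ∧ ∃ T ∈ F, x ∈ T ∧ y ∈ T

/-- `φ(t)`: the maximum of `λ(𝒯)` over triangle families with `|𝒯| = t`. -/
noncomputable def phi (t : ℕ) : ℝ :=
  sSup {r : ℝ | ∃ F : Finset (Finset ℕ), IsTriFam F ∧ F.card = t ∧ lam F = r}

/-- `Λ(t) = max_{1 ≤ s ≤ t} φ(s)`. -/
noncomputable def Lam (t : ℕ) : ℝ :=
  sSup {r : ℝ | ∃ s : ℕ, 1 ≤ s ∧ s ≤ t ∧ phi s = r}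

/-- `H(n) = min{ s ≥ 1 : φ(C(n,3)+s) > n - 1 }`. -/
noncomputable def Hfun (n : ℕ) : ℕ :=
  sInf {s : ℕ | 1 ≤ s ∧ (n : ℝ) - 1 < phi (n.choose 3 + s)}

/-- The triangle family `𝒯_{c,b}`: all 3-cliques of `K_c ∨ (b isolated vertices)`. -/
def Tcb (c b : ℕ) : Finset (Finset ℕ) :=
  ((Finset.Icc 1 c).powersetCard 3) ∪
    (Finset.Icc (c+1) (c+b)).biUnion
      (fun i => ((Finset.Icc 1 c).powersetCard 2).image (fun p => insert i p))

lemma spec_aux {m : Type*} [Fintype m] [DecidableEq m] (M : Matrix m m ℝ) (hM : M.PosSemidef)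
    (e : m) (he : 0 < M e e) :
    ∃ μ : ℝ, (0 < μ ∧ ∃ v : m → ℝ, v ≠ 0 ∧ M.mulVec v = μ • v) ∧
      μ * M e e ≤ ∑ e', (M e' e) ^ 2 := by
  have hH := hM.isHermitian
  have hsym : ∀ i j, M i j = M j i := fun i j => by
    have := hH.apply i j
    simpa using this.symm
  let b := hH.eigenvectorBasis
  let ev := hH.eigenvalues
  have hb : ∀ i, M.mulVec (b i).ofLp = ev i • (b i).ofLp := fun i => hH.mulVec_eigenvectorBasis i
  have hev : ∀ i, 0 ≤ ev i := fun i => hM.eigenvalues_nonneg i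
  let col : EuclideanSpace ℝ m := WithLp.toLp 2 (fun j => M j e)
  have hcol : ∀ i, inner ℝ (b i) col = ev i * b i e := by
    intro i
    have := congrFun (hb i) e
    simp only [Matrix.mulVec, dotProduct, Pi.smul_apply, smul_eq_mul] at this
    rw [← this]
    simp only [PiLp.inner_apply, col]
    refine Finset.sum_congr rfl fun j _ => ?_
    simp [hsym e j]
  have hcol' : ∀ i, inner ℝ col (b i) = ev i * b i e := by
    intro i
    rw [real_inner_comm, hcol]
  have h1 : ∑ i, (b i e) ^ 2 * ev i = M e e := by
    have := b.sum_inner_mul_inner (EuclideanSpace.single e (1 : ℝ)) col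
    simp only [hcol] at this
    have h2 : inner ℝ (EuclideanSpace.single e (1 : ℝ)) col = M e e := by
      simp [EuclideanSpace.inner_single_left, col]
    rw [h2] at this
    rw [← this]
    refine Finset.sum_congr rfl fun i _ => ?_
    simp [EuclideanSpace.inner_single_left]
    ring
  have h2 : ∑ i, (b i e) ^ 2 * ev i ^ 2 = ∑ e', (M e' e) ^ 2 := by
    have := b.sum_inner_mul_inner col col
    simp only [hcol, hcol'] at this
    have h2 : inner ℝ col col = ∑ e', (M e' e) ^ 2 := by
      simp only [PiLp.inner_apply, col]
      refine Finset.sum_congr rfl fun i _ => ?_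
      simp [sq]
    rw [h2] at this
    rw [← this]
    refine Finset.sum_congr rfl fun i _ => ?_
    ring
  by_contra hcon
  push Not at hcon
  set S := ∑ e', (M e' e) ^ 2 with hS
  have key : ∀ i, 0 < ev i → S < ev i * M e e := by
    intro i hi
    refine hcon _ ⟨hi, (b i).ofLp, ?_, hb i⟩
    intro h0
    have : b i = 0 := by
      ext j
      exact congrFun h0 j
    have hn := b.orthonormal.1 i
    rw [this] at hn
    simp at hn
  have h3 : ∑ i, (b i e) ^ 2 * ev i * (ev i * M e e - S) = 0 := by
    have : ∑ i, (b i e) ^ 2 * ev i * (ev i * M e e - S) =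
        (∑ i, (b i e) ^ 2 * ev i ^ 2) * M e e - (∑ i, (b i e) ^ 2 * ev i) * S := by
      rw [Finset.sum_mul, Finset.sum_mul, ← Finset.sum_sub_distrib]
      refine Finset.sum_congr rfl fun i _ => ?_
      ring
    rw [this, h1, h2]
    ring
  have h4 : ∀ i ∈ Finset.univ, 0 ≤ (b i e) ^ 2 * ev i * (ev i * M e e - S) := by
    intro i _
    rcases (hev i).eq_or_lt with h | h
    · rw [← h]; simp
    · have := key i h
      have : 0 < ev i * M e e - S := by linarith
      positivity
  have h5 := (Finset.sum_eq_zero_iff_of_nonneg h4).1 h3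
  have h6 : ∑ i, (b i e) ^ 2 * ev i = 0 := by
    refine Finset.sum_eq_zero fun i hi => ?_
    rcases (hev i).eq_or_lt with h | h
    · rw [← h]; simp
    · have h7 := key i h
      rcases mul_eq_zero.1 (h5 i hi) with h8 | h8
      · exact h8
      · linarith
  linarith

lemma triSign_sq {T e : Finset ℕ} (hT : T.card = 3) (he : e.card = 2) :
    triSign T e ^ 2 = if e ⊆ T then 1 else 0 := by
  unfold triSign
  by_cases h : e ⊆ T
  · simp only [h, hT, he, and_self, if_true]
    split_ifs <;> norm_num
  · simp [h]

lemma mem_edgesOf {F : Finset (Finset ℕ)} {e : Finset ℕ} :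
    e ∈ edgesOf F ↔ ∃ T ∈ F, e ⊆ T ∧ e.card = 2 := by
  simp [edgesOf, Finset.mem_powersetCard]

lemma triSign_zero {T e : Finset ℕ} (h : ¬ e ⊆ T) : triSign T e = 0 := by
  simp [triSign, h]

/-- The number of triangles through `e`. -/
def edeg (F : Finset (Finset ℕ)) (e : Finset ℕ) : ℕ := (F.filter fun T => e ⊆ T).card

lemma gram_apply (F : Finset (Finset ℕ)) (e' e : {e // e ∈ edgesOf F}) :
    ((delta1 F)ᵀ * delta1 F) e' e = ∑ T ∈ F, triSign T e'.1 * triSign T e.1 := by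
  rw [Matrix.mul_apply, ← Finset.sum_coe_sort F]
  rfl

lemma gram_self {F : Finset (Finset ℕ)} (hF : IsTriFam F) (e : {e // e ∈ edgesOf F}) :
    ((delta1 F)ᵀ * delta1 F) e e = edeg F e.1 := by
  obtain ⟨T, hT, heT, he⟩ := mem_edgesOf.1 e.2
  rw [gram_apply, edeg, Finset.card_filter]
  push_cast
  refine Finset.sum_congr rfl fun T hT => ?_
  rw [← sq, triSign_sq (hF.2 T hT) he]

lemma gram_sq_sum {F : Finset (Finset ℕ)} (hF : IsTriFam F) (e : {e // e ∈ edgesOf F}) :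
    ∑ e', (((delta1 F)ᵀ * delta1 F) e' e) ^ 2 = (edeg F e.1 : ℝ) * (edeg F e.1 + 2) := by
  obtain ⟨T0, hT0, heT0, he⟩ := mem_edgesOf.1 e.2
  have h1 : ∀ e' : {e // e ∈ edgesOf F}, (((delta1 F)ᵀ * delta1 F) e' e) ^ 2 =
      ∑ T ∈ F, triSign T e'.1 ^ 2 * triSign T e.1 ^ 2 +
        if e' = e then (edeg F e.1 : ℝ) ^ 2 - edeg F e.1 else 0 := by
    intro e'
    obtain ⟨T1, hT1, heT1, he1⟩ := mem_edgesOf.1 e'.2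
    split_ifs with h
    · subst h
      rw [gram_self hF]
      have : ∑ T ∈ F, triSign T e'.1 ^ 2 * triSign T e'.1 ^ 2 = (edeg F e'.1 : ℝ) := by
        rw [edeg, Finset.card_filter]
        push_cast
        refine Finset.sum_congr rfl fun T hT => ?_
        rw [triSign_sq (hF.2 T hT) he]
        split_ifs <;> norm_num
      rw [this]; ring
    · rw [gram_apply, add_zero]
      have hz : ∀ T ∈ F, T ≠ e'.1 ∪ e.1 → triSign T e'.1 * triSign T e.1 = 0 := by
        intro T hT hne
        by_contra h0
        apply hne
        have ha : e'.1 ⊆ T := by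
          by_contra hc; exact h0 (by rw [triSign_zero hc, zero_mul])
        have hb : e.1 ⊆ T := by
          by_contra hc; exact h0 (by rw [triSign_zero hc, mul_zero])
        symm
        apply Finset.eq_of_subset_of_card_le (Finset.union_subset ha hb)
        rw [hF.2 T hT]
        by_contra hlt
        have hle : (e'.1 ∪ e.1).card ≤ 2 := by omega
        have q1 : e'.1 = e'.1 ∪ e.1 :=
          Finset.eq_of_subset_of_card_le Finset.subset_union_left (by omega)
        have q2 : e.1 = e'.1 ∪ e.1 :=
          Finset.eq_of_subset_of_card_le Finset.subset_union_right (by omega)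
        exact h (Subtype.ext (q1.trans q2.symm))
      by_cases hm : e'.1 ∪ e.1 ∈ F
      · rw [Finset.sum_eq_single_of_mem _ hm hz, Finset.sum_eq_single_of_mem _ hm, mul_pow]
        intro T hT hne
        rw [← mul_pow, hz T hT hne]; norm_num
      · have hz' : ∀ T ∈ F, triSign T e'.1 * triSign T e.1 = 0 := fun T hT =>
          hz T hT (fun h => hm (h ▸ hT))
        rw [Finset.sum_eq_zero hz', Finset.sum_eq_zero]
        · norm_num
        · intro T hT
          rw [← mul_pow, hz' T hT]; norm_num
  rw [Finset.sum_congr rfl (fun e' _ => h1 e'), Finset.sum_add_distrib, Finset.sum_comm]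
  have h2 : ∀ T ∈ F, ∑ e' : {e // e ∈ edgesOf F}, triSign T e'.1 ^ 2 * triSign T e.1 ^ 2 =
      3 * triSign T e.1 ^ 2 := by
    intro T hT
    rw [← Finset.sum_mul]
    congr 1
    rw [Finset.sum_coe_sort (edgesOf F) (fun e' => triSign T e' ^ 2)]
    have : ∀ e' ∈ edgesOf F, triSign T e' ^ 2 = if e' ⊆ T then 1 else 0 := by
      intro e' h'
      obtain ⟨T1, hT1, heT1, he1⟩ := mem_edgesOf.1 h'
      exact triSign_sq (hF.2 T hT) he1
    rw [Finset.sum_congr rfl this, Finset.sum_boole]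
    have h3 : (edgesOf F).filter (fun e' => e' ⊆ T) = T.powersetCard 2 := by
      ext e'
      simp only [Finset.mem_filter, mem_edgesOf, Finset.mem_powersetCard]
      constructor
      · rintro ⟨⟨_, _, _, h⟩, h'⟩; exact ⟨h', h⟩
      · rintro ⟨h, h'⟩; exact ⟨⟨T, hT, h, h'⟩, h⟩
    rw [h3, Finset.card_powersetCard, hF.2 T hT]
    norm_num [Nat.choose]
  rw [Finset.sum_congr rfl h2, ← Finset.mul_sum]
  have h4 : ∑ T ∈ F, triSign T e.1 ^ 2 = (edeg F e.1 : ℝ) := by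
    rw [← gram_self hF, gram_apply]
    exact Finset.sum_congr rfl fun T _ => sq _
  rw [h4]
  simp
  ring

lemma edeg_pos {F : Finset (Finset ℕ)} (e : {e // e ∈ edgesOf F}) : 0 < edeg F e.1 := by
  obtain ⟨T, hT, heT, he⟩ := mem_edgesOf.1 e.2
  exact Finset.card_pos.2 ⟨T, Finset.mem_filter.2 ⟨hT, heT⟩⟩

lemma exists_eig {F : Finset (Finset ℕ)} (hF : IsTriFam F) (e : {e // e ∈ edgesOf F}) :
    ∃ μ : ℝ, (0 < μ ∧ ∃ v, v ≠ 0 ∧ ((delta1 F)ᵀ * delta1 F).mulVec v = μ • v) ∧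
      μ ≤ edeg F e.1 + 2 := by
  have hp : (0 : ℝ) < edeg F e.1 := by exact_mod_cast edeg_pos e
  have hps : ((delta1 F)ᵀ * delta1 F).PosSemidef := by
    have := Matrix.posSemidef_conjTranspose_mul_self (delta1 F)
    rwa [Matrix.conjTranspose_eq_transpose_of_trivial] at this
  obtain ⟨μ, h1, h2⟩ := spec_aux _ hps e (by rw [gram_self hF]; exact hp)
  refine ⟨μ, h1, ?_⟩
  rw [gram_self hF, gram_sq_sum hF, mul_comm] at h2
  exact le_of_mul_le_mul_left h2 hp

lemma lam_le {F : Finset (Finset ℕ)} (hF : IsTriFam F) (e : {e // e ∈ edgesOf F}) :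
    lam F ≤ edeg F e.1 + 2 := by
  obtain ⟨μ, h1, h2⟩ := exists_eig hF e
  unfold lam lambdaMinPos
  refine (csInf_le ⟨(0 : ℝ), ?_⟩ h1).trans h2
  rintro x ⟨hx, -⟩
  exact hx.le

/-- Counting: large edge degrees force many triangles. -/
lemma count_aux {F : Finset (Finset ℕ)} (hF : IsTriFam F) (k : ℕ)
    (hk : ∀ e ∈ edgesOf F, k ≤ edeg F e) :
    k + 2 ≤ (vertsOf F).card ∧ (vertsOf F).card * ((k + 1) * k) ≤ 6 * F.card ∧
      F.card ≤ (vertsOf F).card.choose 3 := by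
  classical
  have hsub : ∀ T ∈ F, T ⊆ vertsOf F := fun T hT => Finset.subset_biUnion_of_mem id hT
  let N : ℕ → Finset ℕ := fun x => (vertsOf F).filter fun y => {x, y} ∈ edgesOf F
  have hpair : ∀ x y, {x, y} ∈ edgesOf F ↔ x ≠ y ∧ ∃ T ∈ F, x ∈ T ∧ y ∈ T := by
    intro x y
    rw [mem_edgesOf]
    constructor
    · rintro ⟨T, hT, h1, h2⟩
      refine ⟨?_, T, hT, ?_, ?_⟩
      · rintro rfl; simp at h2
      · exact h1 (by simp)
      · exact h1 (by simp)
    · rintro ⟨h, T, hT, h1, h2⟩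
      refine ⟨T, hT, ?_, Finset.card_pair h⟩
      intro z hz
      simp at hz
      rcases hz with rfl | rfl <;> assumption
  have hxN : ∀ x, x ∉ N x := by
    intro x hx
    exact ((hpair x x).1 (Finset.mem_filter.1 hx).2).1 rfl
  -- degree of a vertex
  have hN : ∀ x ∈ vertsOf F, k + 1 ≤ (N x).card := by
    intro x hx
    obtain ⟨T, hT, hxT⟩ := Finset.mem_biUnion.1 hx
    obtain ⟨y, hy, hyx⟩ : ∃ y ∈ T, y ≠ x := by
      apply Finset.exists_mem_ne
      rw [hF.2 T hT]; norm_num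
    simp only [id] at hxT
    have he : {x, y} ∈ edgesOf F := (hpair x y).2 ⟨hyx.symm, T, hT, hxT, hy⟩
    have hd := hk _ he
    have hyN : y ∈ N x := Finset.mem_filter.2 ⟨hsub T hT hy, he⟩
    -- map triangles through {x,y} to third vertices
    have hle : edeg F {x, y} ≤ ((N x).erase y).card := by
      have himg : (F.filter fun T => {x, y} ⊆ T) ⊆
          ((N x).erase y).image (fun z => insert z {x, y}) := by
        intro S hS
        obtain ⟨hS, hxy⟩ := Finset.mem_filter.1 hS
        have hc : (S \ {x, y}).card = 1 := by
          rw [Finset.card_sdiff_of_subset hxy, hF.2 S hS, Finset.card_pair hyx.symm]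
        obtain ⟨z, hz⟩ := Finset.card_eq_one.1 hc
        have hzm : z ∈ S \ {x, y} := by rw [hz]; simp
        simp only [Finset.mem_sdiff, Finset.mem_insert, Finset.mem_singleton, not_or] at hzm
        refine Finset.mem_image.2 ⟨z, Finset.mem_erase.2 ⟨hzm.2.2,
          Finset.mem_filter.2 ⟨hsub S hS hzm.1, (hpair x z).2
            ⟨Ne.symm hzm.2.1, S, hS, hxy (by simp), hzm.1⟩⟩⟩, ?_⟩
        have := Finset.sdiff_union_of_subset hxy
        rw [hz] at this
        rw [← this]; rfl
      exact (Finset.card_le_card himg).trans Finset.card_image_le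
    rw [Finset.card_erase_of_mem hyN] at hle
    have : 0 < (N x).card := Finset.card_pos.2 ⟨y, hyN⟩
    omega
  refine ⟨?_, ?_, ?_⟩
  · obtain ⟨T, hT⟩ := hF.1
    obtain ⟨x, hx⟩ : T.Nonempty := Finset.card_pos.1 (by rw [hF.2 T hT]; norm_num)
    have hxV := hsub T hT hx
    have h1 := hN x hxV
    have h2 : (insert x (N x)).card ≤ (vertsOf F).card := by
      apply Finset.card_le_card
      exact Finset.insert_subset hxV (Finset.filter_subset _ _)
    rw [Finset.card_insert_of_notMem (hxN x)] at h2
    omega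
  · have h1 : ∀ x ∈ vertsOf F, (k + 1) * k ≤ 2 * (F.filter fun T => x ∈ T).card := by
      intro x hx
      have e1 : ∑ y ∈ N x, edeg F {x, y} = 2 * (F.filter fun T => x ∈ T).card := by
        have : ∀ y ∈ N x, edeg F {x, y} = ∑ T ∈ F.filter (fun T => x ∈ T), if y ∈ T then 1 else 0 := by
          intro y hy
          rw [edeg, ← Finset.card_filter, Finset.filter_filter]
          congr 1
          ext T
          simp [Finset.insert_subset_iff]
        rw [Finset.sum_congr rfl this, Finset.sum_comm, mul_comm, ← smul_eq_mul,
          ← Finset.sum_const]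
        refine Finset.sum_congr rfl fun T hT => ?_
        obtain ⟨hT, hxT⟩ := Finset.mem_filter.1 hT
        rw [← Finset.card_filter]
        have : (N x).filter (fun y => y ∈ T) = T.erase x := by
          ext y
          simp only [N, Finset.mem_filter, Finset.mem_erase, hpair]
          constructor
          · rintro ⟨⟨_, h, _⟩, h'⟩; exact ⟨h.symm, h'⟩
          · rintro ⟨h, h'⟩; exact ⟨⟨hsub T hT h', h.symm, T, hT, hxT, h'⟩, h'⟩
        rw [this, Finset.card_erase_of_mem hxT, hF.2 T hT]
      rw [← e1]
      calc (k + 1) * k ≤ (N x).card * k := Nat.mul_le_mul_right _ (hN x hx)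
        _ = ∑ y ∈ N x, k := by rw [Finset.sum_const, smul_eq_mul]
        _ ≤ _ := Finset.sum_le_sum fun y hy => hk _ (Finset.mem_filter.1 hy).2
    have h2 : ∑ x ∈ vertsOf F, (F.filter fun T => x ∈ T).card = 3 * F.card := by
      simp only [Finset.card_filter]
      rw [Finset.sum_comm, mul_comm, ← smul_eq_mul, ← Finset.sum_const]
      refine Finset.sum_congr rfl fun T hT => ?_
      rw [← Finset.card_filter, ← hF.2 T hT]
      congr 1
      ext y
      simp only [Finset.mem_filter]
      exact ⟨fun h => h.2, fun h => ⟨hsub T hT h, h⟩⟩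
    calc (vertsOf F).card * ((k + 1) * k) = ∑ x ∈ vertsOf F, (k + 1) * k := by
          rw [Finset.sum_const, smul_eq_mul]
      _ ≤ ∑ x ∈ vertsOf F, 2 * (F.filter fun T => x ∈ T).card := Finset.sum_le_sum h1
      _ = 6 * F.card := by rw [← Finset.mul_sum, h2]; ring
  · rw [← Finset.card_powersetCard]
    apply Finset.card_le_card
    intro T hT
    exact Finset.mem_powersetCard.2 ⟨hsub T hT, hF.2 T hT⟩

lemma edeg_ge {F : Finset (Finset ℕ)} (hF : IsTriFam F) (k : ℕ) (h : (k : ℝ) + 1 < lam F) :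
    ∀ e ∈ edgesOf F, k ≤ edeg F e := by
  intro e he
  have := lam_le hF ⟨e, he⟩
  simp only at this
  by_contra hc
  have h2 : edeg F e + 1 ≤ k := by omega
  have h3 : (edeg F e : ℝ) + 1 ≤ k := by exact_mod_cast h2
  linarith

lemma six_choose (n : ℕ) : 6 * (n + 2).choose 3 = (n + 2) * (n + 1) * n := by
  have h := Nat.descFactorial_eq_factorial_mul_choose (n + 2) 3
  simp [Nat.descFactorial, Nat.factorial] at h
  rw [← h]
  ring

lemma lam_le_of_card {F : Finset (Finset ℕ)} (hF : IsTriFam F) (n : ℕ) (hn : 3 ≤ n)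
    (hc : F.card = n.choose 3) : lam F ≤ n := by
  by_contra h
  push Not at h
  obtain ⟨m, rfl⟩ : ∃ m, n = m + 2 := ⟨n - 2, by omega⟩
  obtain ⟨h1, h2, -⟩ := count_aux hF (m + 1) (edeg_ge hF (m + 1) (by push_cast at h ⊢; linarith))
  rw [hc, six_choose] at h2
  have : (m + 3) * ((m + 1 + 1) * (m + 1)) ≤ (vertsOf F).card * ((m + 1 + 1) * (m + 1)) :=
    Nat.mul_le_mul_right _ h1
  nlinarith

lemma lam_le_of_card_succ {F : Finset (Finset ℕ)} (hF : IsTriFam F) (n : ℕ) (hn : 6 ≤ n)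
    (hc : F.card = n.choose 3 + 1) : lam F ≤ n - 1 := by
  by_contra h
  push Not at h
  obtain ⟨m, rfl⟩ : ∃ m, n = m + 2 := ⟨n - 2, by omega⟩
  obtain ⟨h1, h2, h3⟩ := count_aux hF m (edeg_ge hF m (by push_cast at h ⊢; linarith))
  rcases h1.eq_or_lt with h4 | h4
  · rw [← h4, hc] at h3
    omega
  · rw [hc, mul_add, six_choose] at h2
    have : (m + 3) * ((m + 1) * m) ≤ (vertsOf F).card * ((m + 1) * m) :=
      Nat.mul_le_mul_right _ h4
    nlinarith

section complete

lemma tri_card {a b c : ℕ} (h1 : a < b) (h2 : b < c) : ({a, b, c} : Finset ℕ).card = 3 := by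
  rw [Finset.card_eq_three]
  exact ⟨a, b, c, by omega, by omega, by omega, rfl⟩

lemma triSign_ab {a b c : ℕ} (h1 : a < b) (h2 : b < c) : triSign {a, b, c} {a, b} = 1 := by
  have hd : ({a, b, c} : Finset ℕ) \ {a, b} = {c} := by ext; simp; omega
  have hm : ({c} : Finset ℕ).max = ({a, b, c} : Finset ℕ).max := by
    simp only [Finset.max_insert, Finset.max_singleton]
    rw [max_eq_right (WithBot.coe_le_coe.2 h2.le),
      max_eq_right (WithBot.coe_le_coe.2 (h1.trans h2).le)]
  unfold triSign
  rw [if_pos ⟨by intro z; simp; tauto, Finset.card_pair (by omega), tri_card h1 h2⟩, hd,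
    if_pos (Or.inl hm)]

lemma triSign_bc {a b c : ℕ} (h1 : a < b) (h2 : b < c) : triSign {a, b, c} {b, c} = 1 := by
  have hd : ({a, b, c} : Finset ℕ) \ {b, c} = {a} := by ext; simp; omega
  have hm : ({a} : Finset ℕ).min = ({a, b, c} : Finset ℕ).min := by
    simp only [Finset.min_insert, Finset.min_singleton]
    rw [min_eq_left (WithTop.coe_le_coe.2 h2.le),
      min_eq_left (WithTop.coe_le_coe.2 h1.le)]
  unfold triSign
  rw [if_pos ⟨by intro z; simp; tauto, Finset.card_pair (by omega), tri_card h1 h2⟩, hd,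
    if_pos (Or.inr hm)]

lemma triSign_ac {a b c : ℕ} (h1 : a < b) (h2 : b < c) : triSign {a, b, c} {a, c} = -1 := by
  have hd : ({a, b, c} : Finset ℕ) \ {a, c} = {b} := by ext; simp; omega
  have hm : ({a, b, c} : Finset ℕ).min = WithTop.some a := by
    simp only [Finset.min_insert, Finset.min_singleton]
    rw [min_eq_left (WithTop.coe_le_coe.2 h2.le),
      min_eq_left (WithTop.coe_le_coe.2 h1.le)]
  have hm' : ({a, b, c} : Finset ℕ).max = WithBot.some c := by
    simp only [Finset.max_insert, Finset.max_singleton]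
    rw [max_eq_right (WithBot.coe_le_coe.2 h2.le),
      max_eq_right (WithBot.coe_le_coe.2 (h1.trans h2).le)]
  unfold triSign
  rw [if_pos ⟨by intro z; simp; tauto, Finset.card_pair (by omega), tri_card h1 h2⟩, hd,
    if_neg]
  rw [hm, hm', Finset.max_singleton, Finset.min_singleton]
  rintro (h | h)
  · have : b = c := WithBot.coe_injective h
    omega
  · have : b = a := WithTop.coe_injective h
    omega

/-- The coboundary of an edge function. -/
noncomputable def cob (w : Finset ℕ → ℝ) (T : Finset ℕ) : ℝ :=
  ∑ e ∈ T.powersetCard 2, triSign T e * w e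

lemma powersetCard_tri {a b c : ℕ} (h1 : a < b) (h2 : b < c) :
    ({a, b, c} : Finset ℕ).powersetCard 2 = {{a, b}, {a, c}, {b, c}} := by
  symm
  have hab : ({a, b} : Finset ℕ) ≠ {a, c} := by
    intro h; have : b ∈ ({a, c} : Finset ℕ) := h ▸ (by simp)
    simp at this; omega
  have hac : ({a, b} : Finset ℕ) ≠ {b, c} := by
    intro h; have : a ∈ ({b, c} : Finset ℕ) := h ▸ (by simp)
    simp at this; omega
  have hbc : ({a, c} : Finset ℕ) ≠ {b, c} := by
    intro h; have : a ∈ ({b, c} : Finset ℕ) := h ▸ (by simp)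
    simp at this; omega
  apply Finset.eq_of_subset_of_card_le
  · intro e he
    simp only [Finset.mem_insert, Finset.mem_singleton] at he
    rw [Finset.mem_powersetCard]
    rcases he with rfl | rfl | rfl
    · exact ⟨by intro z; simp; tauto, Finset.card_pair (by omega)⟩
    · exact ⟨by intro z; simp; tauto, Finset.card_pair (by omega)⟩
    · exact ⟨by intro z; simp; tauto, Finset.card_pair (by omega)⟩
  · rw [Finset.card_powersetCard, tri_card h1 h2,
      Finset.card_eq_three.2 ⟨_, _, _, hab, hac, hbc, rfl⟩]
    norm_num [Nat.choose]

lemma cob_tri (w : Finset ℕ → ℝ) {a b c : ℕ} (h1 : a < b) (h2 : b < c) :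
    cob w {a, b, c} = w {a, b} - w {a, c} + w {b, c} := by
  have hab : ({a, b} : Finset ℕ) ≠ {a, c} := by
    intro h; have : b ∈ ({a, c} : Finset ℕ) := h ▸ (by simp)
    simp at this; omega
  have hac : ({a, b} : Finset ℕ) ≠ {b, c} := by
    intro h; have : a ∈ ({b, c} : Finset ℕ) := h ▸ (by simp)
    simp at this; omega
  have hbc : ({a, c} : Finset ℕ) ≠ {b, c} := by
    intro h; have : a ∈ ({b, c} : Finset ℕ) := h ▸ (by simp)
    simp at this; omega
  rw [cob, powersetCard_tri h1 h2, Finset.sum_insert (by simp [hab, hac]),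
    Finset.sum_insert (by simp [hbc]), Finset.sum_singleton, triSign_ab h1 h2,
    triSign_ac h1 h2, triSign_bc h1 h2]
  ring

/-- The antisymmetric function of an edge function. -/
noncomputable def anti (w : Finset ℕ → ℝ) (x y : ℕ) : ℝ :=
  if x < y then w {x, y} else if y < x then - w {y, x} else 0

lemma anti_swap (w : Finset ℕ → ℝ) (x y : ℕ) : anti w y x = - anti w x y := by
  unfold anti
  rcases lt_trichotomy x y with h | h | h
  · simp [h, h.le.not_gt]
  · simp [h]
  · simp [h, h.le.not_gt]

lemma anti_self (w : Finset ℕ → ℝ) (x : ℕ) : anti w x x = 0 := by simp [anti]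

lemma anti_lt (w : Finset ℕ → ℝ) {x y : ℕ} (h : x < y) : anti w x y = w {x, y} := by
  simp [anti, h]

lemma anti_gt (w : Finset ℕ → ℝ) {x y : ℕ} (h : x < y) : anti w y x = - w {x, y} := by
  rw [anti_swap, anti_lt w h]

lemma sign_cob (w : Finset ℕ → ℝ) {x y z : ℕ} (h : x < y) (hx : z ≠ x) (hy : z ≠ y) :
    triSign (insert z {x, y}) {x, y} * cob w (insert z {x, y}) =
      anti w x y + anti w y z + anti w z x := by
  rcases lt_or_gt_of_ne hx with h1 | h1
  · rw [triSign_bc h1 h, cob_tri w h1 h, anti_lt w h, anti_lt w h1, anti_gt w (h1.trans h)]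
    ring
  · rcases lt_or_gt_of_ne hy with h2 | h2
    · have : (insert z {x, y} : Finset ℕ) = {x, z, y} := by ext; simp; tauto
      rw [this, triSign_ac h1 h2, cob_tri w h1 h2, anti_lt w h, anti_gt w h1, anti_gt w h2]
      ring
    · have : (insert z {x, y} : Finset ℕ) = {x, y, z} := by ext; simp; tauto
      rw [this, triSign_ab h h2, cob_tri w h h2, anti_lt w h, anti_lt w h2,
        anti_gt w (h.trans h2)]
      ring

/-- The complete family. -/
def KF (n : ℕ) : Finset (Finset ℕ) := (Finset.range n).powersetCard 3

lemma KF_isTriFam {n : ℕ} (hn : 3 ≤ n) : IsTriFam (KF n) := by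
  refine ⟨Finset.powersetCard_nonempty.2 (by simpa using hn), fun T hT => ?_⟩
  exact (Finset.mem_powersetCard.1 hT).2

lemma insert_mem_KF {n x y z : ℕ} (hx : x < n) (hy : y < n) (hxy : x ≠ y) (hz : z < n)
    (hzx : z ≠ x) (hzy : z ≠ y) : insert z {x, y} ∈ KF n := by
  rw [KF, Finset.mem_powersetCard]
  constructor
  · intro u
    simp only [Finset.mem_insert, Finset.mem_singleton, Finset.mem_range]
    rintro (rfl | rfl | rfl) <;> assumption
  · exact Finset.card_eq_three.2 ⟨z, x, y, hzx, hzy, hxy, rfl⟩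

lemma KF_sum {n x y : ℕ} (hx : x < n) (hy : y < n) (hxy : x ≠ y) (f : Finset ℕ → ℝ) :
    ∑ T ∈ (KF n).filter (fun T => {x, y} ⊆ T), f T =
      ∑ z ∈ (Finset.range n).filter (fun z => z ≠ x ∧ z ≠ y), f (insert z {x, y}) := by
  symm
  refine Finset.sum_bij (fun z _ => insert z {x, y}) ?_ ?_ ?_ ?_
  · intro z hz
    simp only [Finset.mem_filter, Finset.mem_range] at hz
    refine Finset.mem_filter.2 ⟨insert_mem_KF hx hy hxy hz.1 hz.2.1 hz.2.2, ?_⟩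
    exact Finset.subset_insert _ _
  · intro z hz z' hz' h
    simp only [Finset.mem_filter, Finset.mem_range] at hz hz'
    have : z ∈ (insert z' {x, y} : Finset ℕ) := h ▸ (by simp)
    simp only [Finset.mem_insert, Finset.mem_singleton] at this
    tauto
  · intro S hS
    obtain ⟨hS, hsub⟩ := Finset.mem_filter.1 hS
    obtain ⟨hSr, hS3⟩ := Finset.mem_powersetCard.1 hS
    have hc : (S \ {x, y}).card = 1 := by
      rw [Finset.card_sdiff_of_subset hsub, hS3, Finset.card_pair hxy]
    obtain ⟨z, hz⟩ := Finset.card_eq_one.1 hc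
    have hzm : z ∈ S \ {x, y} := by rw [hz]; simp
    simp only [Finset.mem_sdiff, Finset.mem_insert, Finset.mem_singleton, not_or] at hzm
    refine ⟨z, Finset.mem_filter.2 ⟨hSr hzm.1, hzm.2⟩, ?_⟩
    have := Finset.sdiff_union_of_subset hsub
    rw [hz] at this
    rw [← this]; rfl
  · intro z _; rfl

lemma mem_KF_edges {n : ℕ} (hn : 3 ≤ n) {x y : ℕ} (hx : x < n) (hy : y < n) (hxy : x ≠ y) :
    {x, y} ∈ edgesOf (KF n) := by
  obtain ⟨z, hz, hz'⟩ : ∃ z ∈ Finset.range n, z ∉ ({x, y} : Finset ℕ) := by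
    apply Finset.exists_mem_notMem_of_card_lt_card
    rw [Finset.card_pair hxy, Finset.card_range]; omega
  simp only [Finset.mem_insert, Finset.mem_singleton, not_or, Finset.mem_range] at hz hz'
  exact mem_edgesOf.2 ⟨_, insert_mem_KF hx hy hxy hz hz'.1 hz'.2, Finset.subset_insert _ _,
    Finset.card_pair hxy⟩

lemma edge_KF {n : ℕ} {e : Finset ℕ} (he : e ∈ edgesOf (KF n)) :
    ∃ x y, x < y ∧ y < n ∧ e = {x, y} := by
  obtain ⟨T, hT, heT, hc⟩ := mem_edgesOf.1 he
  obtain ⟨x, y, hxy, rfl⟩ := Finset.card_eq_two.1 hc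
  have hTr := (Finset.mem_powersetCard.1 hT).1
  have hx := Finset.mem_range.1 (hTr (heT (by simp : x ∈ ({x, y} : Finset ℕ))))
  have hy := Finset.mem_range.1 (hTr (heT (by simp : y ∈ ({x, y} : Finset ℕ))))
  rcases lt_or_gt_of_ne hxy with h | h
  · exact ⟨x, y, h, hy, rfl⟩
  · exact ⟨y, x, h, hx, Finset.pair_comm _ _⟩

lemma edeg_KF {n x y : ℕ} (hx : x < n) (hy : y < n) (hxy : x ≠ y) :
    edeg (KF n) {x, y} + 2 = n := by
  have h := KF_sum hx hy hxy (fun _ => 1)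
  simp only [Finset.sum_const, nsmul_eq_mul, mul_one] at h
  have h' : edeg (KF n) {x, y} =
    ((Finset.range n).filter (fun z => z ≠ x ∧ z ≠ y)).card := by exact_mod_cast h
  rw [h']
  have : (Finset.range n).filter (fun z => z ≠ x ∧ z ≠ y) = Finset.range n \ {x, y} := by
    ext; simp
  rw [this, Finset.card_sdiff_of_subset, Finset.card_pair hxy, Finset.card_range]
  · omega
  · intro u
    simp only [Finset.mem_insert, Finset.mem_singleton, Finset.mem_range]
    rintro (rfl | rfl) <;> assumption

lemma KF_mulVec {n : ℕ} (hn : 3 ≤ n) (w : Finset ℕ → ℝ) {x y : ℕ} (hxy : x < y) (hy : y < n) :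
    ((delta1 (KF n))ᵀ * delta1 (KF n)).mulVec (fun e => w e.1)
      ⟨{x, y}, mem_KF_edges hn (hxy.trans hy) hy hxy.ne⟩ =
    n * anti w x y + ∑ z ∈ Finset.range n, anti w y z - ∑ z ∈ Finset.range n, anti w x z := by
  have hx := hxy.trans hy
  have hF := KF_isTriFam hn
  have h1 : ((delta1 (KF n))ᵀ * delta1 (KF n)).mulVec (fun e => w e.1)
      ⟨{x, y}, mem_KF_edges hn (hxy.trans hy) hy hxy.ne⟩ =
      ∑ T ∈ KF n, triSign T {x, y} * cob w T := by
    simp only [Matrix.mulVec, dotProduct, gram_apply]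
    rw [Finset.sum_coe_sort (edgesOf (KF n))
      (fun e => (∑ T ∈ KF n, triSign T {x, y} * triSign T e) * w e)]
    simp only [Finset.sum_mul]
    rw [Finset.sum_comm]
    refine Finset.sum_congr rfl fun T hT => ?_
    rw [cob, Finset.mul_sum]
    symm
    simp only [mul_assoc]
    apply Finset.sum_subset
    · exact Finset.subset_biUnion_of_mem (fun T => T.powersetCard 2) hT
    · intro e he hne
      have hc : e.card = 2 := (mem_edgesOf.1 he).choose_spec.2.2
      have : ¬ e ⊆ T := fun h => hne (Finset.mem_powersetCard.2 ⟨h, hc⟩)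
      rw [triSign_zero this]; ring
  have h2 : ∑ T ∈ KF n, triSign T {x, y} * cob w T =
      ∑ T ∈ (KF n).filter (fun T => {x, y} ⊆ T), triSign T {x, y} * cob w T := by
    symm
    apply Finset.sum_filter_of_ne
    intro T _ h
    by_contra hc
    exact h (by rw [triSign_zero hc, zero_mul])
  rw [h1, h2, KF_sum hx hy hxy.ne]
  have h3 : ∑ z ∈ (Finset.range n).filter (fun z => z ≠ x ∧ z ≠ y),
      triSign (insert z {x, y}) {x, y} * cob w (insert z {x, y}) =
      ∑ z ∈ (Finset.range n).filter (fun z => z ≠ x ∧ z ≠ y),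
        (anti w x y + anti w y z + anti w z x) := by
    refine Finset.sum_congr rfl fun z hz => ?_
    have hz := (Finset.mem_filter.1 hz).2
    exact sign_cob w hxy hz.1 hz.2
  have h4 : ∑ z ∈ (Finset.range n).filter (fun z => z ≠ x ∧ z ≠ y),
        (anti w x y + anti w y z + anti w z x) =
      ∑ z ∈ Finset.range n, (anti w x y + anti w y z + anti w z x) := by
    apply Finset.sum_filter_of_ne
    intro z _ h
    constructor
    · rintro rfl
      apply h
      rw [anti_self, anti_swap w z y]; ring
    · rintro rfl
      apply h
      rw [anti_self, anti_swap w x z]; ring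
  rw [h3, h4]
  simp only [Finset.sum_add_distrib, Finset.sum_const, Finset.card_range, nsmul_eq_mul,
    anti_swap w x _, Finset.sum_neg_distrib]
  ring

lemma KF_eig {n : ℕ} (hn : 3 ≤ n) (μ : ℝ) (hμ : 0 < μ) (v : {e // e ∈ edgesOf (KF n)} → ℝ)
    (hv : v ≠ 0) (h : ((delta1 (KF n))ᵀ * delta1 (KF n)).mulVec v = μ • v) : μ = n := by
  classical
  let w : Finset ℕ → ℝ := fun e => if h : e ∈ edgesOf (KF n) then v ⟨e, h⟩ else 0
  have hw : v = fun e => w e.1 := by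
    funext e
    simp [w, e.2]
  let s : ℕ → ℝ := fun x => ∑ z ∈ Finset.range n, anti w x z
  have key1 : ∀ x y, x < y → y < n → μ * anti w x y = n * anti w x y + s y - s x := by
    intro x y hxy hy
    have h1 := KF_mulVec hn w hxy hy
    rw [← hw, h, hw, ] at h1
    simp only [Pi.smul_apply, smul_eq_mul] at h1
    rw [← anti_lt w hxy] at h1
    exact h1
  have key : ∀ x ∈ Finset.range n, ∀ y ∈ Finset.range n,
      μ * anti w x y = n * anti w x y + s y - s x := by
    intro x hx y hy
    rw [Finset.mem_range] at hx hy
    rcases lt_trichotomy x y with hxy | hxy | hxy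
    · exact key1 x y hxy hy
    · subst hxy; rw [anti_self]; ring
    · have := key1 y x hxy hx
      rw [anti_swap w y x]; linarith
  have hs0 : ∑ x ∈ Finset.range n, s x = 0 := by
    have : ∑ x ∈ Finset.range n, s x = - ∑ x ∈ Finset.range n, s x := by
      have hc : ∑ x ∈ Finset.range n, s x =
          ∑ y ∈ Finset.range n, ∑ x ∈ Finset.range n, anti w x y := Finset.sum_comm
      refine hc.trans ?_
      rw [← Finset.sum_neg_distrib]
      refine Finset.sum_congr rfl fun y _ => ?_
      rw [← Finset.sum_neg_distrib]
      exact Finset.sum_congr rfl fun x _ => anti_swap w y x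
    linarith
  have hs : ∀ x ∈ Finset.range n, s x = 0 := by
    intro x hx
    have h1 : ∑ y ∈ Finset.range n, μ * anti w x y =
        ∑ y ∈ Finset.range n, (n * anti w x y + s y - s x) :=
      Finset.sum_congr rfl fun y hy => key x hx y hy
    rw [Finset.sum_sub_distrib, Finset.sum_add_distrib, ← Finset.mul_sum, ← Finset.mul_sum, hs0,
      Finset.sum_const, Finset.card_range, nsmul_eq_mul] at h1
    have h2 : μ * s x = n * s x + 0 - n * s x := h1
    have h3 : μ * s x = 0 := by linarith
    exact (mul_eq_zero.1 h3).resolve_left hμ.ne'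
  obtain ⟨e, he⟩ := Function.ne_iff.1 hv
  obtain ⟨x, y, hxy, hy, hexy⟩ := edge_KF e.2
  have h1 := key1 x y hxy hy
  rw [hs x (by simp; omega), hs y (by simp; omega)] at h1
  have h2 : anti w x y ≠ 0 := by
    rw [anti_lt w hxy, ← hexy]
    rw [hw] at he
    exact he
  have : (μ - n) * anti w x y = 0 := by linarith
  have := (mul_eq_zero.1 this).resolve_right h2
  linarith

lemma lam_KF {n : ℕ} (hn : 3 ≤ n) : lam (KF n) = n := by
  have hF := KF_isTriFam hn
  obtain ⟨μ, h1, -⟩ := exists_eig hF ⟨{0, 1}, mem_KF_edges hn (by omega) (by omega) (by omega)⟩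
  have : {μ : ℝ | 0 < μ ∧ ∃ v, v ≠ 0 ∧ ((delta1 (KF n))ᵀ * delta1 (KF n)).mulVec v = μ • v} =
      {(n : ℝ)} := by
    ext ν
    simp only [Set.mem_ofPred_eq, Set.mem_singleton_iff]
    constructor
    · rintro ⟨h, v, hv, hv'⟩
      exact KF_eig hn ν h v hv hv'
    · rintro rfl
      obtain ⟨h, v, hv, hv'⟩ := h1
      have := KF_eig hn μ h v hv hv'
      subst this
      exact ⟨h, v, hv, hv'⟩
  unfold lam lambdaMinPos
  rw [this, csInf_singleton]

end complete

lemma phi_choose (n : ℕ) (hn : 3 ≤ n) : phi (n.choose 3) = n := by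
  unfold phi
  apply le_antisymm
  · apply Real.sSup_le
    · rintro r ⟨F, hF, hc, rfl⟩
      exact lam_le_of_card hF n hn hc
    · positivity
  · apply le_csSup
    · refine ⟨(n : ℝ), ?_⟩
      rintro r ⟨F, hF, hc, rfl⟩
      exact lam_le_of_card hF n hn hc
    · exact ⟨KF n, KF_isTriFam hn, by simp [KF], lam_KF hn⟩

lemma phi_choose_succ (n : ℕ) (hn : 6 ≤ n) : phi (n.choose 3 + 1) ≤ (n : ℝ) - 1 := by
  unfold phi
  apply Real.sSup_le
  · rintro r ⟨F, hF, hc, rfl⟩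
    exact lam_le_of_card_succ hF n hn hc
  · have : (6 : ℝ) ≤ n := by exact_mod_cast hn
    linarith

/-- `φ` is not monotone: for every `n ≥ 6`, with `n₁ = C(n,3)`, `n₂ = C(n,3) + 1` and
`n₃ = C(n+1,3)`, we have `n₁ < n₂ < n₃`, `φ(n₁) = n`, `φ(n₂) ≤ n - 1`, `φ(n₃) = n + 1`,
hence `φ(n₂) < φ(n₁) < φ(n₃)`. -/
theorem stmt13 :
    (¬ Monotone phi) ∧
    ∀ n : ℕ, 6 ≤ n →
      n.choose 3 < n.choose 3 + 1 ∧ n.choose 3 + 1 < (n + 1).choose 3 ∧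
      phi (n.choose 3) = (n : ℝ) ∧
      phi (n.choose 3 + 1) ≤ (n : ℝ) - 1 ∧
      phi ((n + 1).choose 3) = (n : ℝ) + 1 ∧
      phi (n.choose 3 + 1) < phi (n.choose 3) ∧
      phi (n.choose 3) < phi ((n + 1).choose 3) := by
  have main : ∀ n : ℕ, 6 ≤ n → phi (n.choose 3 + 1) < phi (n.choose 3) := by
    intro n hn
    have := phi_choose_succ n hn
    rw [phi_choose n (by omega)]
    linarith
  refine ⟨fun hm => ?_, fun n hn => ⟨Nat.lt_succ_self _, ?_, phi_choose n (by omega),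
    phi_choose_succ n hn, ?_, main n hn, ?_⟩⟩
  · exact absurd (hm (Nat.le_succ (Nat.choose 6 3))) (not_le.2 (main 6 le_rfl))
  · have h1 : (n + 1).choose 3 = n.choose 2 + n.choose 3 := Nat.choose_succ_succ n 2
    have h2 : Nat.choose 6 2 ≤ n.choose 2 := Nat.choose_le_choose 2 hn
    have h3 : Nat.choose 6 2 = 15 := by decide
    omega
  · rw [phi_choose (n + 1) (by omega)]; push_cast; ring
  · rw [phi_choose (n + 1) (by omega), phi_choose n (by omega)]; push_cast; linarith
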